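/- If y₁ ≡ y₁′ (mod 2b) and y₂ ≡ y₂′ (mod 2b), then the Lengyel transfer games L(b;x₁,y₁;x₂,y₂) and L(b;x₁,y₁′;x₂,y₂′) have the same Sprague–Grundy function: for all (x,y) ∈ ℕ×ℕ, SG_{L(b;x₁,y₁;x₂,y₂)}(x,y) = SG_{L(b;x₁,y₁′;x₂,y₂′)}(x,y). -/

import Mathlib

/-- The minimum excludant of a set of naturals: the least natural number not in the set. -/
noncomputable def mex (S : Set ℕ) : ℕ := sInf {n : ℕ | n ∉ S}

/-- `SG` is the Sprague–Grundy function of the Lengyel transfer game `L(b; x₁,y₁; x₂,y₂)`: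
from `(x,y)` one may move to `(x, y−b)` (when `y ≥ b`), to `(x−x₁, y+y₁)` (when `x ≥ x₁`),
or to `(x−x₂, y+y₂)` (when `x ≥ x₂`), and `SG` satisfies the mex recurrence. -/
def IsLengyelSG (b x1 y1 x2 y2 : ℕ) (SG : ℕ → ℕ → ℕ) : Prop :=
  ∀ x y : ℕ, SG x y = mex
    ((if b ≤ y then ({SG x (y - b)} : Set ℕ) else ∅) ∪
     (if x1 ≤ x then ({SG (x - x1) (y + y1)} : Set ℕ) else ∅) ∪
     (if x2 ≤ x then ({SG (x - x2) (y + y2)} : Set ℕ) else ∅))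

/-!
Fix `x`. In the column over `x`, the Sprague–Grundy function is determined by the values contributed
by the transfer moves. If these are `2b`-periodic in `y`, then shifting the column by `2b` gives
another solution of the same recurrence: for `y < b` the only surplus option of `(x, y + 2b)` is
`(x, y + b)`, whose value differs from that of its own option `(x, y)` and hence does not change
the mex. So the column is `2b`-periodic as well, and by induction on `x` all columns are. Changing
the `yᵢ` modulo `2b` therefore leaves the value of every option unchanged.
-/

theorem mex_notMem {S : Set ℕ} (hS : Sᶜ.Nonempty) : mex S ∉ S :=
  Nat.sInf_mem hS

theorem mex_le_of_notMem {S : Set ℕ} {n : ℕ} (hn : n ∉ S) : mex S ≤ n :=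
  Nat.sInf_le hn

theorem mex_insert_of_ne {S : Set ℕ} {a : ℕ} (hS : Sᶜ.Nonempty) (ha : a ≠ mex S) :
    mex (insert a S) = mex S := by
  have mex_notMem_insert : mex S ∉ insert a S :=
    fun h => h.elim ha.symm (mex_notMem hS)
  apply le_antisymm (mex_le_of_notMem mex_notMem_insert)
  have mex_insert_notMem : mex (insert a S) ∉ insert a S := mex_notMem ⟨_, mex_notMem_insert⟩
  exact mex_le_of_notMem fun h => mex_insert_notMem (Set.mem_insert_of_mem a h)

/-- `f` is the Sprague–Grundy function of a single column, in which one may subtract `b` from `y` or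
leave the column for positions whose values form the set `T y`. -/
def IsColumnSG (b : ℕ) (T : ℕ → Set ℕ) (f : ℕ → ℕ) : Prop :=
  ∀ y, f y = mex ((if b ≤ y then {f (y - b)} else ∅) ∪ T y)

namespace IsColumnSG

variable {b : ℕ} {T : ℕ → Set ℕ} {f g : ℕ → ℕ}

theorem apply_of_lt (hf : IsColumnSG b T f) {y : ℕ} (hy : y < b) : f y = mex (T y) := by
  rw [hf y, if_neg hy.not_ge, Set.empty_union]

theorem apply_add (hf : IsColumnSG b T f) (y : ℕ) :
    f (y + b) = mex (insert (f y) (T (y + b))) := by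
  rw [hf (y + b), if_pos (Nat.le_add_left b y), Nat.add_sub_cancel, Set.singleton_union]

theorem apply_add_ne (hf : IsColumnSG b T f) {y : ℕ} (hT : (T (y + b)).Finite) :
    f (y + b) ≠ f y := by
  have value_notMem : f (y + b) ∉ insert (f y) (T (y + b)) := by
    rw [hf.apply_add y]
    exact mex_notMem (hT.insert (f y)).infinite_compl.nonempty
  exact fun h => value_notMem (Or.inl h)

theorem unique (hb : 0 < b) (hf : IsColumnSG b T f) (hg : IsColumnSG b T g) : f = g := by
  funext y
  induction y using Nat.strong_induction_on with
  | _ y ih =>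
    obtain hy | hy := lt_or_ge y b
    · rw [hf.apply_of_lt hy, hg.apply_of_lt hy]
    · obtain ⟨z, rfl⟩ := Nat.exists_eq_add_of_le' hy
      rw [hf.apply_add, hg.apply_add, ih z (Nat.lt_add_of_pos_right hb)]

theorem shift_two_mul (hf : IsColumnSG b T f) (hfin : ∀ y, (T y).Finite)
    (hT : Function.Periodic T (2 * b)) : IsColumnSG b T fun y => f (y + 2 * b) := by
  intro y
  change f (y + 2 * b) = mex ((if b ≤ y then {f (y - b + 2 * b)} else ∅) ∪ T y)
  have shifted : f (y + 2 * b) = mex (insert (f (y + b)) (T y)) := by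
    rw [← hT y, two_mul, ← add_assoc, hf.apply_add]
  obtain hy | hy := lt_or_ge y b
  · have surplus_ne : f (y + b) ≠ mex (T y) := by
      rw [← hf.apply_of_lt hy]
      exact hf.apply_add_ne (hfin _)
    rw [shifted, mex_insert_of_ne (hfin y).infinite_compl.nonempty surplus_ne,
      if_neg hy.not_ge, Set.empty_union]
  · have previous : y + b = y - b + 2 * b := by omega
    rw [shifted, if_pos hy, Set.singleton_union, previous]

theorem periodic (hb : 0 < b) (hf : IsColumnSG b T f) (hfin : ∀ y, (T y).Finite)
    (hT : Function.Periodic T (2 * b)) : Function.Periodic f (2 * b) :=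
  congrFun ((hf.shift_two_mul hfin hT).unique hb hf)

end IsColumnSG

section TransferGame

variable {ι : Type*}

/-- The values under `SG` of the positions reachable from `(x, y)` by a transfer move, where the
`i`-th transfer removes `dx i` from `x` and adds `dy i` to `y`. -/
def transferValues (dx dy : ι → ℕ) (SG : ℕ → ℕ → ℕ) (x y : ℕ) : Set ℕ :=
  (fun i => SG (x - dx i) (y + dy i)) '' {i | dx i ≤ x}

/-- `SG` is the Sprague–Grundy function of the Lengyel transfer game with an arbitrary family of
transfer moves `(x, y) ↦ (x - dx i, y + dy i)` in place of two. -/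
def IsTransferSG (b : ℕ) (dx dy : ι → ℕ) (SG : ℕ → ℕ → ℕ) : Prop :=
  ∀ x, IsColumnSG b (transferValues dx dy SG x) (SG x)

theorem finite_transferValues [Finite ι] (dx dy : ι → ℕ) (SG : ℕ → ℕ → ℕ) (x y : ℕ) :
    (transferValues dx dy SG x y).Finite :=
  (Set.toFinite _).image _

theorem transferValues_congr {dx dy dy' : ι → ℕ} {SG SG' : ℕ → ℕ → ℕ} {x y y' : ℕ}
    (h : ∀ i, dx i ≤ x → SG (x - dx i) (y + dy i) = SG' (x - dx i) (y' + dy' i)) :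
    transferValues dx dy SG x y = transferValues dx dy' SG' x y' :=
  Set.image_congr h

namespace IsTransferSG

variable {b : ℕ} {dx dy dy' : ι → ℕ} {SG SG' : ℕ → ℕ → ℕ}

theorem unique (hb : 0 < b) (hdx : ∀ i, 0 < dx i) (hSG : IsTransferSG b dx dy SG)
    (hSG' : IsTransferSG b dx dy SG') : SG = SG' := by
  funext x
  induction x using Nat.strong_induction_on with
  | _ x ih =>
    have values_eq : transferValues dx dy SG x = transferValues dx dy SG' x :=
      funext fun y => transferValues_congr fun i hi =>
        congrFun (ih (x - dx i) (Nat.sub_lt_self (hdx i) hi)) (y + dy i)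
    exact (hSG x).unique hb (values_eq ▸ hSG' x)

theorem periodic [Finite ι] (hb : 0 < b) (hdx : ∀ i, 0 < dx i) (hSG : IsTransferSG b dx dy SG)
    (x : ℕ) : Function.Periodic (SG x) (2 * b) := by
  induction x using Nat.strong_induction_on with
  | _ x ih =>
    have values_periodic : Function.Periodic (transferValues dx dy SG x) (2 * b) :=
      fun y => transferValues_congr fun i hi => by
        rw [Nat.add_right_comm, ih (x - dx i) (Nat.sub_lt_self (hdx i) hi)]
    exact (hSG x).periodic hb (finite_transferValues dx dy SG x) values_periodic

theorem of_modEq {m : ℕ} (hSG : IsTransferSG b dx dy SG)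
    (hper : ∀ x, Function.Periodic (SG x) m) (hdy : ∀ i, dy i ≡ dy' i [MOD m]) :
    IsTransferSG b dx dy' SG := by
  intro x
  have values_eq : transferValues dx dy SG x = transferValues dx dy' SG x :=
    funext fun y => transferValues_congr fun i _ => by
      rw [← (hper _).map_mod_nat (y + dy i), (hdy i).add_left y, (hper _).map_mod_nat]
  exact values_eq ▸ hSG x

end IsTransferSG

theorem sg_congr_mod_two_b_general [Finite ι] {b : ℕ} {dx dy dy' : ι → ℕ} {SG SG' : ℕ → ℕ → ℕ}
    (hb : 0 < b) (hdx : ∀ i, 0 < dx i) (hdy : ∀ i, dy i ≡ dy' i [MOD 2 * b])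
    (hSG : IsTransferSG b dx dy SG) (hSG' : IsTransferSG b dx dy' SG') : SG = SG' :=
  (hSG.of_modEq (hSG.periodic hb hdx) hdy).unique hb hdx hSG'

end TransferGame

theorem transferValues_pair (x1 y1 x2 y2 : ℕ) (SG : ℕ → ℕ → ℕ) (x y : ℕ) :
    transferValues ![x1, x2] ![y1, y2] SG x y =
      (if x1 ≤ x then {SG (x - x1) (y + y1)} else ∅) ∪
        (if x2 ≤ x then {SG (x - x2) (y + y2)} else ∅) := by
  ext n
  simp [transferValues, Fin.exists_fin_two, eq_comm]

theorem IsLengyelSG.isTransferSG {b x1 y1 x2 y2 : ℕ} {SG : ℕ → ℕ → ℕ}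
    (hSG : IsLengyelSG b x1 y1 x2 y2 SG) : IsTransferSG b ![x1, x2] ![y1, y2] SG := by
  intro x y
  rw [transferValues_pair, ← Set.union_assoc]
  exact hSG x y

/-- If `y₁ ≡ y₁' (mod 2b)` and `y₂ ≡ y₂' (mod 2b)`, then `L(b;x₁,y₁;x₂,y₂)` and
`L(b;x₁,y₁';x₂,y₂')` have the same Sprague–Grundy function. -/
theorem sg_congr_mod_two_b (b x1 x2 y1 y2 y1' y2' : ℕ)
    (hb : 0 < b) (hx1 : 0 < x1) (hx2 : 0 < x2)
    (h1 : y1 ≡ y1' [MOD 2 * b]) (h2 : y2 ≡ y2' [MOD 2 * b])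
    (SG SG' : ℕ → ℕ → ℕ)
    (hSG : IsLengyelSG b x1 y1 x2 y2 SG) (hSG' : IsLengyelSG b x1 y1' x2 y2' SG') :
    ∀ x y : ℕ, SG x y = SG' x y :=
  congrFun₂ <| sg_congr_mod_two_b_general hb (Fin.forall_fin_two.2 ⟨hx1, hx2⟩)
    (Fin.forall_fin_two.2 ⟨h1, h2⟩) hSG.isTransferSG hSG'.isTransferSG
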